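/- Let n ≥ 1 and let u : ℝⁿ → ℝ be a function of type (★) satisfying det D²u = e^{−u} on ℝⁿ. Then for every α ∈ {1,…,n}, the integral ∫_{ℝⁿ} (∂u/∂x_α)(x) · e^{−u(x)} dx converges and equals 0. -/

import Mathlib

/-!
The sum `S x = ∑ a_I e^{I·x}` is positive and `∂ᵢu = (∑ a_I I_i e^{I·x}) / S - 1`, so the gradient
map `Du` takes values in a bounded box. It is injective: with weights `w_I = a_I e^{I·x}` and
`c_I = I·(y - x)`, the equality `Du x = Du y` is the equality case of Chebyshev's sum inequality for
the similarly ordered families `c` and `exp c`, which makes `c` constant; comparing the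
multi-indices `0` and `eᵢ` gives `y = x`. The change of variables formula then turns the
Monge–Ampère equation into `∫ e^{-u} = ∫ |det D²u| = vol (Du(ℝⁿ)) < ∞`. Hence `e^{-u}` is
integrable, and so is its derivative `-∂_α u · e^{-u}` because `∂_α u` is bounded; the integral of an
integrable partial derivative of an integrable function is zero.
-/

open Real Filter MeasureTheory

/-- The partial derivative of `u : ℝⁿ → ℝ` in the `i`-th coordinate direction. -/
noncomputable def pderivAt {n : ℕ} (u : (Fin n → ℝ) → ℝ) (i : Fin n) (x : Fin n → ℝ) : ℝ :=
  fderiv ℝ u x (Pi.single i 1)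

/-- The gradient map `Du : ℝⁿ → ℝⁿ` of `u`. -/
noncomputable def gradMap {n : ℕ} (u : (Fin n → ℝ) → ℝ) (x : Fin n → ℝ) : Fin n → ℝ :=
  fun i => pderivAt u i x

/-- The Hessian matrix `D²u` of `u` at `x`. -/
noncomputable def hessMat {n : ℕ} (u : (Fin n → ℝ) → ℝ) (x : Fin n → ℝ) :
    Matrix (Fin n) (Fin n) ℝ :=
  Matrix.of fun i j => pderivAt (pderivAt u j) i x

/-- `u` is of type (★) with index set `𝓘` and coefficients `a`:
`u x = log (∑_{I ∈ 𝓘} a_I e^{I·x}) − ∑ i, x i`, where `𝓘 ⊂ ℕⁿ` is finite, contains every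
multi-index of length `≤ 1`, `a_I > 0` on `𝓘`, and `a_I = 1` whenever `|I| ≤ 1`. -/
def IsTypeStar {n : ℕ} (u : (Fin n → ℝ) → ℝ) (𝓘 : Finset (Fin n → ℕ))
    (a : (Fin n → ℕ) → ℝ) : Prop :=
  (∀ I : Fin n → ℕ, (∑ i, I i) ≤ 1 → I ∈ 𝓘) ∧
  (∀ I ∈ 𝓘, 0 < a I) ∧
  (∀ I : Fin n → ℕ, (∑ i, I i) ≤ 1 → a I = 1) ∧
  ∀ x, u x = Real.log (∑ I ∈ 𝓘, a I * Real.exp (∑ i, (I i : ℝ) * x i)) - ∑ i, x i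

/-- `u` satisfies the Monge–Ampère equation `det D²u = e^{−u}` on all of `ℝⁿ`. -/
def SatisfiesMA {n : ℕ} (u : (Fin n → ℝ) → ℝ) : Prop :=
  ∀ x, (hessMat u x).det = Real.exp (-(u x))

/-- The exponential sum `∑_{I ∈ 𝓘} a_I e^{I·x}`. -/
noncomputable def expSum {n : ℕ} (𝓘 : Finset (Fin n → ℕ)) (a : (Fin n → ℕ) → ℝ)
    (x : Fin n → ℝ) : ℝ :=
  ∑ I ∈ 𝓘, a I * Real.exp (∑ i, (I i : ℝ) * x i)

/-- Equality case of Chebyshev's sum inequality for the families `c` and `exp c` with positive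
weights `w`: the family `c` is constant. -/
lemma eq_of_chebyshev_eq {ι : Type*} (s : Finset ι) (w c : ι → ℝ) (hw : ∀ i ∈ s, 0 < w i)
    (h : (∑ i ∈ s, w i * c i * Real.exp (c i)) * (∑ i ∈ s, w i) =
      (∑ i ∈ s, w i * c i) * ∑ i ∈ s, w i * Real.exp (c i)) :
    ∀ i ∈ s, ∀ j ∈ s, c i = c j := by
  have hnn : ∀ i j : ι, 0 ≤ (c i - c j) * (Real.exp (c i) - Real.exp (c j)) := by
    intro i j
    rcases le_total (c i) (c j) with hij | hij
    · exact mul_nonneg_of_nonpos_of_nonpos (sub_nonpos.2 hij)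
        (sub_nonpos.2 (Real.exp_le_exp.2 hij))
    · exact mul_nonneg (sub_nonneg.2 hij) (sub_nonneg.2 (Real.exp_le_exp.2 hij))
  have hterm : ∀ i ∈ s, ∀ j ∈ s,
      0 ≤ w i * w j * ((c i - c j) * (Real.exp (c i) - Real.exp (c j))) := fun i hi j hj =>
    mul_nonneg (mul_pos (hw i hi) (hw j hj)).le (hnn i j)
  have hexp : ∑ i ∈ s, ∑ j ∈ s, w i * w j * ((c i - c j) * (Real.exp (c i) - Real.exp (c j))) =
      2 * ((∑ i ∈ s, w i * c i * Real.exp (c i)) * (∑ i ∈ s, w i) -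
        (∑ i ∈ s, w i * c i) * ∑ i ∈ s, w i * Real.exp (c i)) := by
    have e : ∀ i j : ι, w i * w j * ((c i - c j) * (Real.exp (c i) - Real.exp (c j))) =
        (w i * c i * Real.exp (c i)) * w j - (w i * c i) * (w j * Real.exp (c j))
          - (w i * Real.exp (c i)) * (w j * c j) + w i * (w j * c j * Real.exp (c j)) := by
      intro i j; ring
    simp_rw [e, Finset.sum_add_distrib, Finset.sum_sub_distrib, ← Finset.sum_mul_sum]
    ring
  rw [h, sub_self, mul_zero, Finset.sum_eq_zero_iff_of_nonneg
    (fun i hi => Finset.sum_nonneg (hterm i hi))] at hexp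
  intro i hi j hj
  have h1 := (Finset.sum_eq_zero_iff_of_nonneg (hterm i hi)).1 (hexp i hi) j hj
  have h2 := (mul_eq_zero.1 h1).resolve_left (mul_pos (hw i hi) (hw j hj)).ne'
  rcases mul_eq_zero.1 h2 with h3 | h3
  · exact sub_eq_zero.1 h3
  · exact Real.exp_injective (sub_eq_zero.1 h3)

section TypeStar

variable {n : ℕ} {u : (Fin n → ℝ) → ℝ} {𝓘 : Finset (Fin n → ℕ)} {a : (Fin n → ℕ) → ℝ}

lemma expSum_pos (hu : IsTypeStar u 𝓘 a) (x : Fin n → ℝ) : 0 < expSum 𝓘 a x :=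
  Finset.sum_pos (fun I hI => mul_pos (hu.2.1 I hI) (Real.exp_pos _)) ⟨0, hu.1 0 (by simp)⟩

lemma contDiff_expSum : ContDiff ℝ 2 (expSum 𝓘 a) := by
  unfold expSum; fun_prop

lemma IsTypeStar.contDiff (hu : IsTypeStar u 𝓘 a) : ContDiff ℝ 2 u := by
  have h : u = fun x => Real.log (expSum 𝓘 a x) - ∑ i, x i := funext hu.2.2.2
  rw [h]
  exact (contDiff_expSum.log fun x => (expSum_pos hu x).ne').sub (by fun_prop)

lemma IsTypeStar.contDiff_gradMap (hu : IsTypeStar u 𝓘 a) : ContDiff ℝ 1 (gradMap u) := by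
  refine contDiff_pi.2 fun i => ?_
  exact (hu.contDiff.fderiv_right (m := 1) (by norm_num)).clm_apply contDiff_const

lemma gradMap_eq (hu : IsTypeStar u 𝓘 a) (x : Fin n → ℝ) (i : Fin n) :
    gradMap u x i =
      (∑ I ∈ 𝓘, a I * Real.exp (∑ k, (I k : ℝ) * x k) * (I i : ℝ)) / expSum 𝓘 a x - 1 := by
  have h : u = fun x => Real.log (expSum 𝓘 a x) - ∑ i, x i := funext hu.2.2.2
  have hline : ∀ k : Fin n,
      HasDerivAt (fun t : ℝ => (x + t • (Pi.single i 1 : Fin n → ℝ)) k)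
        ((Pi.single i 1 : Fin n → ℝ) k) 0 := fun k => by
    simpa using ((hasDerivAt_id (0 : ℝ)).mul_const ((Pi.single i 1 : Fin n → ℝ) k)).const_add (x k)
  have hS : HasDerivAt (fun t : ℝ => expSum 𝓘 a (x + t • (Pi.single i 1 : Fin n → ℝ)))
      (∑ I ∈ 𝓘, a I * Real.exp (∑ k, (I k : ℝ) * x k) * (I i : ℝ)) 0 := by
    unfold expSum
    refine HasDerivAt.fun_sum fun I _ => ?_
    have h1 : HasDerivAt
        (fun t : ℝ => ∑ k, (I k : ℝ) * (x + t • (Pi.single i 1 : Fin n → ℝ)) k)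
        (∑ k, (I k : ℝ) * (Pi.single i 1 : Fin n → ℝ) k) 0 :=
      HasDerivAt.fun_sum fun k _ => (hline k).const_mul _
    have h2 := h1.exp.const_mul (a I)
    simpa [Pi.single_apply, mul_assoc] using h2
  have hu' : HasDerivAt (fun t : ℝ => u (x + t • (Pi.single i 1 : Fin n → ℝ)))
      ((∑ I ∈ 𝓘, a I * Real.exp (∑ k, (I k : ℝ) * x k) * (I i : ℝ)) / expSum 𝓘 a x - 1) 0 := by
    have h1 := hS.log (by simpa using (expSum_pos hu x).ne')
    have h2 : HasDerivAt (fun t : ℝ => ∑ k, (x + t • (Pi.single i 1 : Fin n → ℝ)) k)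
        (∑ k, (Pi.single i 1 : Fin n → ℝ) k) 0 := HasDerivAt.fun_sum fun k _ => hline k
    have h3 := h1.sub h2
    rw [h]
    simpa [Pi.single_apply, Pi.sub_def] using h3
  have hd : HasFDerivAt u (fderiv ℝ u x) x :=
    ((hu.contDiff.differentiable (by norm_num)) x).hasFDerivAt
  exact (hd.hasLineDerivAt (Pi.single i 1)).unique hu'

lemma exists_abs_gradMap_le (hu : IsTypeStar u 𝓘 a) :
    ∃ C : ℝ, ∀ x i, |gradMap u x i| ≤ C := by
  refine ⟨(∑ I ∈ 𝓘, ∑ i, (I i : ℝ)) + 1, fun x i => ?_⟩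
  have hS := expSum_pos hu x
  have hle : ∀ I ∈ 𝓘, (I i : ℝ) ≤ ∑ I ∈ 𝓘, ∑ i, (I i : ℝ) := fun I hI =>
    (Finset.single_le_sum (f := fun i => (I i : ℝ)) (fun _ _ => by positivity)
      (Finset.mem_univ i)).trans
    (Finset.single_le_sum (f := fun I : Fin n → ℕ => ∑ i, (I i : ℝ))
      (fun _ _ => by positivity) hI)
  have hw : ∀ I ∈ 𝓘, 0 ≤ a I * Real.exp (∑ k, (I k : ℝ) * x k) := fun I hI =>
    (mul_pos (hu.2.1 I hI) (Real.exp_pos _)).le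
  have h0 : 0 ≤ (∑ I ∈ 𝓘, a I * Real.exp (∑ k, (I k : ℝ) * x k) * (I i : ℝ)) / expSum 𝓘 a x :=
    div_nonneg (Finset.sum_nonneg fun I hI => mul_nonneg (hw I hI) (by positivity)) hS.le
  have h1 : (∑ I ∈ 𝓘, a I * Real.exp (∑ k, (I k : ℝ) * x k) * (I i : ℝ)) / expSum 𝓘 a x ≤
      ∑ I ∈ 𝓘, ∑ i, (I i : ℝ) := by
    rw [div_le_iff₀ hS, mul_comm, expSum, Finset.sum_mul]
    exact Finset.sum_le_sum fun I hI => mul_le_mul_of_nonneg_left (hle I hI) (hw I hI)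
  rw [gradMap_eq hu, abs_le]
  constructor <;> linarith

lemma gradMap_injective (hu : IsTypeStar u 𝓘 a) : Function.Injective (gradMap u) := by
  intro x y hxy
  set w : (Fin n → ℕ) → ℝ := fun I => a I * Real.exp (∑ k, (I k : ℝ) * x k) with hw
  set c : (Fin n → ℕ) → ℝ := fun I => ∑ k, (I k : ℝ) * (y k - x k) with hc
  have hwc : ∀ I, a I * Real.exp (∑ k, (I k : ℝ) * y k) = w I * Real.exp (c I) := fun I => by
    simp only [hw, hc, mul_assoc, ← Real.exp_add, ← Finset.sum_add_distrib]
    congr 3 with k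
    ring
  have hSx : expSum 𝓘 a x = ∑ I ∈ 𝓘, w I := rfl
  have hSy : expSum 𝓘 a y = ∑ I ∈ 𝓘, w I * Real.exp (c I) :=
    Finset.sum_congr rfl fun I _ => hwc I
  have hi : ∀ i, (∑ I ∈ 𝓘, w I * Real.exp (c I) * (I i : ℝ)) * (∑ I ∈ 𝓘, w I) =
      (∑ I ∈ 𝓘, w I * (I i : ℝ)) * ∑ I ∈ 𝓘, w I * Real.exp (c I) := fun i => by
    have h := congrFun hxy i
    rw [gradMap_eq hu, gradMap_eq hu, sub_left_inj,
      div_eq_div_iff (expSum_pos hu x).ne' (expSum_pos hu y).ne', hSx, hSy] at h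
    simp_rw [hwc] at h
    exact h.symm
  -- Contracting the `n` gradient equations with `y - x` gives the Chebyshev equality.
  have key := eq_of_chebyshev_eq 𝓘 w c (fun I hI => mul_pos (hu.2.1 I hI) (Real.exp_pos _)) (by
    have e : ∀ g : (Fin n → ℕ) → ℝ, ∑ I ∈ 𝓘, g I * c I =
        ∑ i, (∑ I ∈ 𝓘, g I * (I i : ℝ)) * (y i - x i) := fun g => by
      simp only [hc, Finset.mul_sum, Finset.sum_mul]
      rw [Finset.sum_comm]
      simp only [mul_assoc]
    have e1 := e fun I => w I * Real.exp (c I)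
    have e2 := e w
    simp only [mul_right_comm _ (c _) (Real.exp _)]
    rw [e1, e2, Finset.sum_mul, Finset.sum_mul]
    refine Finset.sum_congr rfl fun i _ => ?_
    rw [mul_right_comm, hi i, mul_right_comm])
  funext i
  have h := key (Pi.single i 1) (hu.1 _ (by simp [Pi.single_apply])) 0 (hu.1 0 (by simp))
  simp [hc, Pi.single_apply] at h
  linarith

lemma det_fderiv_gradMap (hu : IsTypeStar u 𝓘 a) (x : Fin n → ℝ) :
    (fderiv ℝ (gradMap u) x).det = (hessMat u x).det := by
  have hd : DifferentiableAt ℝ (gradMap u) x :=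
    hu.contDiff_gradMap.differentiable (by norm_num) x
  -- `hessMat` lists the direction of differentiation first, the Jacobian lists it second.
  have hM : LinearMap.toMatrix' (fderiv ℝ (gradMap u) x : (Fin n → ℝ) →ₗ[ℝ] (Fin n → ℝ)) =
      (hessMat u x).transpose := by
    ext j i
    have h := (hasFDerivAt_pi'.1 hd.hasFDerivAt j).fderiv
    have h' : fderiv ℝ (pderivAt u j) x =
        (ContinuousLinearMap.proj j).comp (fderiv ℝ (gradMap u) x) := h
    simp only [LinearMap.toMatrix'_apply, Matrix.transpose_apply, hessMat, Matrix.of_apply]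
    rw [pderivAt, h']
    rfl
  rw [← Matrix.det_transpose, ← hM, LinearMap.det_toMatrix']

lemma integrable_exp_neg (hu : IsTypeStar u 𝓘 a) (hMA : SatisfiesMA u) :
    Integrable fun x => Real.exp (-(u x)) := by
  have hcont : Continuous fun x => Real.exp (-(u x)) :=
    Real.continuous_exp.comp hu.contDiff.continuous.neg
  refine ⟨hcont.aestronglyMeasurable, ?_⟩
  rw [hasFiniteIntegral_iff_ofReal (ae_of_all _ fun x => (Real.exp_pos _).le)]
  obtain ⟨C, hC⟩ := exists_abs_gradMap_le hu
  have hcv := lintegral_abs_det_fderiv_eq_addHaar_image (volume : Measure (Fin n → ℝ))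
    MeasurableSet.univ
    (fun x _ => (hu.contDiff_gradMap.differentiable (by norm_num) x).hasFDerivAt.hasFDerivWithinAt)
    (gradMap_injective hu).injOn
  simp only [Measure.restrict_univ, det_fderiv_gradMap hu, hMA _, Real.abs_exp] at hcv
  rw [hcv]
  have hsub : gradMap u '' Set.univ ⊆ Set.Icc (fun _ => -C) (fun _ => C) := by
    rintro _ ⟨x, -, rfl⟩
    exact ⟨fun i => (abs_le.1 (hC x i)).1, fun i => (abs_le.1 (hC x i)).2⟩
  exact (measure_mono hsub).trans_lt isCompact_Icc.measure_lt_top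

end TypeStar

/-- for a type (★) solution of `det D²u = e^{−u}`, the integral
`∫_{ℝⁿ} (∂u/∂x_α) e^{−u} dx` converges and vanishes for every `α`. -/
theorem stmt7 {n : ℕ} (hn : 1 ≤ n) (u : (Fin n → ℝ) → ℝ)
    (𝓘 : Finset (Fin n → ℕ)) (a : (Fin n → ℕ) → ℝ)
    (hu : IsTypeStar u 𝓘 a) (hMA : SatisfiesMA u) :
    ∀ α : Fin n,
      Integrable (fun x : Fin n → ℝ => gradMap u x α * Real.exp (-(u x))) ∧
      ∫ x : Fin n → ℝ, gradMap u x α * Real.exp (-(u x)) = 0 := by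
  intro α
  have hE := integrable_exp_neg hu hMA
  obtain ⟨C, hC⟩ := exists_abs_gradMap_le hu
  have hI : Integrable fun x : Fin n → ℝ => gradMap u x α * Real.exp (-(u x)) :=
    hE.bdd_mul (c := C)
      ((continuous_apply α).comp hu.contDiff_gradMap.continuous).aestronglyMeasurable
      (ae_of_all _ fun x => hC x α)
  refine ⟨hI, ?_⟩
  have hder : ∀ x, HasLineDerivAt ℝ (fun x => Real.exp (-(u x)))
      (-(gradMap u x α * Real.exp (-(u x)))) x (Pi.single α 1) := fun x => by
    have hd : HasFDerivAt u (fderiv ℝ u x) x :=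
      ((hu.contDiff.differentiable (by norm_num)) x).hasFDerivAt
    have h := hd.neg.exp.hasLineDerivAt (Pi.single α 1)
    have e : (Real.exp (-(u x)) • -fderiv ℝ u x) (Pi.single α 1) =
        -(gradMap u x α * Real.exp (-(u x))) := by
      simp [gradMap, pderivAt, mul_comm]
    exact e ▸ h
  -- Integration by parts against the constant function `1`.
  have h := integral_bilinear_hasLineDerivAt_right_eq_neg_left_of_integrable
    (μ := (volume : Measure (Fin n → ℝ))) (B := ContinuousLinearMap.mul ℝ ℝ)
    (f := fun _ => (1 : ℝ)) (f' := fun _ => 0) (g := fun x => Real.exp (-(u x)))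
    (g' := fun x => -(gradMap u x α * Real.exp (-(u x)))) (v := Pi.single α 1)
    (by simp) (by simpa using hI.neg) (by simpa using hE)
    (fun x _ => by simpa using (hasFDerivAt_const (1 : ℝ) x).hasLineDerivAt (Pi.single α 1))
    (fun x _ => hder x)
  simpa [integral_neg] using h
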